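/- A holomorphic function θ : D → [N⁻, N⁺] on the open unit disc is the transfer function of some one-parametric conservative scattering LSDS with input space N⁻ and output space N⁺ (i.e. θ(z) = zD + zC(I_X − zA)⁻¹zB for some Hilbert space X and operators A, B, C, D with G = [[A, B], [C, D]] unitary) if and only if θ belongs to S⁰(N⁻, N⁺). -/

import Mathlib

open ContinuousLinearMap Metric

noncomputable section

/-- The block operator `[[A, B], [C, D]] : X ⊕ N⁻ → X ⊕ N⁺` (Hilbert space direct sum). -/
def blockOp {X Nm Np : Type*}
    [NormedAddCommGroup X] [InnerProductSpace ℂ X]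
    [NormedAddCommGroup Nm] [InnerProductSpace ℂ Nm]
    [NormedAddCommGroup Np] [InnerProductSpace ℂ Np]
    (A : X →L[ℂ] X) (B : Nm →L[ℂ] X) (C : X →L[ℂ] Np) (D : Nm →L[ℂ] Np) :
    WithLp 2 (X × Nm) →L[ℂ] WithLp 2 (X × Np) :=
  ((WithLp.prodContinuousLinearEquiv 2 ℂ X Np).symm :
      (X × Np) →L[ℂ] WithLp 2 (X × Np)) ∘L
    ((A ∘L ContinuousLinearMap.fst ℂ X Nm + B ∘L ContinuousLinearMap.snd ℂ X Nm).prod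
      (C ∘L ContinuousLinearMap.fst ℂ X Nm + D ∘L ContinuousLinearMap.snd ℂ X Nm)) ∘L
    (WithLp.prodContinuousLinearEquiv 2 ℂ X Nm : WithLp 2 (X × Nm) →L[ℂ] (X × Nm))

/-- A bounded operator between Hilbert spaces is unitary: `G*G = I` and `GG* = I`. -/
def IsUnitaryOp {E F : Type*}
    [NormedAddCommGroup E] [InnerProductSpace ℂ E] [CompleteSpace E]
    [NormedAddCommGroup F] [InnerProductSpace ℂ F] [CompleteSpace F]
    (G : E →L[ℂ] F) : Prop :=
  adjoint G ∘L G = ContinuousLinearMap.id ℂ E ∧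
    G ∘L adjoint G = ContinuousLinearMap.id ℂ F


open Filter Topology

section helpers

variable {X Nm Np : Type*}
    [NormedAddCommGroup X] [InnerProductSpace ℂ X]
    [NormedAddCommGroup Nm] [InnerProductSpace ℂ Nm]
    [NormedAddCommGroup Np] [InnerProductSpace ℂ Np]

lemma blockOp_apply (A : X →L[ℂ] X) (B : Nm →L[ℂ] X) (C : X →L[ℂ] Np) (D : Nm →L[ℂ] Np)
    (x : WithLp 2 (X × Nm)) :
    blockOp A B C D x = WithLp.toLp 2 (A x.fst + B x.snd, C x.fst + D x.snd) := rfl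

lemma isUnitaryOp_of_norm_surj {E F : Type*}
    [NormedAddCommGroup E] [InnerProductSpace ℂ E] [CompleteSpace E]
    [NormedAddCommGroup F] [InnerProductSpace ℂ F] [CompleteSpace F]
    (G : E →L[ℂ] F) (h : ∀ x, ‖G x‖ = ‖x‖) (hs : Function.Surjective G) : IsUnitaryOp G := by
  have h1 := (norm_map_iff_adjoint_comp_self G).1 h
  refine ⟨h1, ?_⟩
  ext y
  obtain ⟨x, rfl⟩ := hs y
  have := congrArg (fun T : E →L[ℂ] E => G (T x)) h1
  simpa using this

lemma IsUnitaryOp.norm_map {E F : Type*}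
    [NormedAddCommGroup E] [InnerProductSpace ℂ E] [CompleteSpace E]
    [NormedAddCommGroup F] [InnerProductSpace ℂ F] [CompleteSpace F]
    {G : E →L[ℂ] F} (h : IsUnitaryOp G) (x : E) : ‖G x‖ = ‖x‖ :=
  (norm_map_iff_adjoint_comp_self G).2 h.1 x

/-- Forward direction, at a point. -/
lemma forward_bound [CompleteSpace X] [CompleteSpace Nm] [CompleteSpace Np]
    (A : X →L[ℂ] X) (B : Nm →L[ℂ] X) (C : X →L[ℂ] Np) (D : Nm →L[ℂ] Np)
    (hG : IsUnitaryOp (blockOp A B C D)) (z : ℂ) (hz : ‖z‖ < 1)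
    (hu : IsUnit ((1 : X →L[ℂ] X) - z • A)) :
    ‖z • D + (z • C) ∘L (Ring.inverse (1 - z • A)) ∘L (z • B)‖ ≤ 1 := by
  refine ContinuousLinearMap.opNorm_le_bound _ zero_le_one fun u => ?_
  set x : X := Ring.inverse (1 - z • A) (z • B u) with hx
  have h1 : x = z • (A x + B u) := by
    have := congrArg (fun T : X →L[ℂ] X => T (z • B u)) (Ring.mul_inverse_cancel _ hu)
    simp only [mul_apply_eq_comp, one_apply_eq_self,
      _root_.sub_apply, _root_.smul_apply, ← hx] at this
    rw [smul_add, ← this]; abel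
  have h2 := hG.norm_map (WithLp.toLp 2 (x, u))
  have h3 : ‖A x + B u‖ ^ 2 + ‖C x + D u‖ ^ 2 = ‖x‖ ^ 2 + ‖u‖ ^ 2 := by
    have := congrArg (fun t : ℝ => t ^ 2) h2
    rw [WithLp.prod_norm_sq_eq_of_L2, WithLp.prod_norm_sq_eq_of_L2, blockOp_apply] at this
    exact this
  have h4 : ‖x‖ ≤ ‖A x + B u‖ := by
    conv_lhs => rw [h1, norm_smul]
    exact mul_le_of_le_one_left (norm_nonneg _) hz.le
  have h5 : ‖C x + D u‖ ≤ ‖u‖ := by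
    have h4' : ‖x‖ ^ 2 ≤ ‖A x + B u‖ ^ 2 := by gcongr
    exact (sq_le_sq₀ (norm_nonneg _) (norm_nonneg _)).1 (by linarith)
  have h6 : (z • D + (z • C) ∘L (Ring.inverse (1 - z • A)) ∘L (z • B)) u = z • (C x + D u) := by
    simp only [_root_.add_apply, _root_.smul_apply, ContinuousLinearMap.comp_apply, ← hx, smul_add]; rw [add_comm]
  rw [h6, norm_smul, one_mul]
  exact (mul_le_of_le_one_left (norm_nonneg _) hz.le).trans h5

lemma isUnit_one_sub_smul [CompleteSpace X] (A : X →L[ℂ] X) (hA : ‖A‖ ≤ 1) (z : ℂ)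
    (hz : ‖z‖ < 1) : IsUnit ((1 : X →L[ℂ] X) - z • A) := by
  apply isUnit_one_sub_of_norm_lt_one
  rw [norm_smul]
  exact lt_of_le_of_lt (mul_le_of_le_one_right (norm_nonneg _) hA) hz

/-- Weak operator limits along an ultrafilter. -/
lemma exists_weak_limit {E F : Type*}
    [NormedAddCommGroup E] [InnerProductSpace ℂ E]
    [NormedAddCommGroup F] [InnerProductSpace ℂ F] [CompleteSpace F]
    (M : ℕ → E →L[ℂ] F) (hM : ∀ n, ‖M n‖ ≤ 1) :
    ∃ L : E →L[ℂ] F, ‖L‖ ≤ 1 ∧ ∀ x y, Tendsto (fun n => inner ℂ (M n x) y)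
      (hyperfilter ℕ) (𝓝 (inner ℂ (L x) y)) := by
  have hb : ∀ n x y, ‖inner ℂ (M n x) y‖ ≤ ‖x‖ * ‖y‖ := fun n x y =>
    (norm_inner_le_norm _ _).trans (by
      gcongr
      exact (M n).le_of_opNorm_le (hM n) x |>.trans (by simp))
  have key : ∀ x y, ∃ c : ℂ, ‖c‖ ≤ ‖x‖ * ‖y‖ ∧ Tendsto (fun n => inner ℂ (M n x) y)
      (hyperfilter ℕ) (𝓝 c) := by
    intro x y
    obtain ⟨c, hc, hc'⟩ := (isCompact_closedBall (0 : ℂ) (‖x‖ * ‖y‖)).ultrafilter_le_nhds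
      ((hyperfilter ℕ).map (fun n => inner ℂ (M n x) y)) (by
        simp only [Ultrafilter.coe_map, le_principal_iff]
        exact Filter.mem_map.2 (Filter.univ_mem' fun n => by
          simpa using hb n x y))
    exact ⟨c, by simpa using hc, hc'⟩
  choose c hc hct using key
  let ψ : E → (F →L[ℂ] ℂ) := fun x => LinearMap.mkContinuous
    { toFun := c x
      map_add' := fun y y' => tendsto_nhds_unique (hct x (y + y'))
        (by simpa [inner_add_right] using (hct x y).add (hct x y'))
      map_smul' := fun a y => tendsto_nhds_unique (hct x (a • y))
        (by simpa [inner_smul_right] using (hct x y).const_mul a) } ‖x‖ (hc x)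
  have hψ : ∀ x y, ψ x y = c x y := fun x y => rfl
  have hin : ∀ x y, inner ℂ ((InnerProductSpace.toDual ℂ F).symm (ψ x)) y = c x y := by
    intro x y
    rw [InnerProductSpace.toDual_symm_apply, hψ]
  let L : E →ₗ[ℂ] F :=
    { toFun := fun x => (InnerProductSpace.toDual ℂ F).symm (ψ x)
      map_add' := fun x x' => ext_inner_right ℂ fun y => by
        rw [inner_add_left, hin, hin, hin]
        exact tendsto_nhds_unique (hct (x + x') y)
          (by simpa [inner_add_left] using (hct x y).add (hct x' y))
      map_smul' := fun a x => ext_inner_right ℂ fun y => by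
        rw [inner_smul_left, hin, hin]
        exact tendsto_nhds_unique (hct (a • x) y)
          (by simpa only [map_smul, inner_smul_left, RingHom.id_apply] using (hct x y).const_mul (starRingEnd ℂ a)) }
  refine ⟨L.mkContinuous 1 fun x => ?_, LinearMap.mkContinuous_norm_le _ zero_le_one _,
    fun x y => ?_⟩
  · change ‖(InnerProductSpace.toDual ℂ F).symm (ψ x)‖ ≤ _
    rw [LinearIsometryEquiv.norm_map, one_mul]
    exact LinearMap.mkContinuous_norm_le _ (norm_nonneg _) _
  · change Tendsto _ _ (𝓝 (inner ℂ ((InnerProductSpace.toDual ℂ F).symm (ψ x)) y))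
    rw [hin]
    exact hct x y

end helpers

/-- Abstract scattering construction. -/
lemma abstract_realization.{u} {Nm Np K : Type u}
    [NormedAddCommGroup Nm] [InnerProductSpace ℂ Nm] [CompleteSpace Nm]
    [NormedAddCommGroup Np] [InnerProductSpace ℂ Np] [CompleteSpace Np]
    [NormedAddCommGroup K] [InnerProductSpace ℂ K] [CompleteSpace K]
    [TopologicalSpace.SeparableSpace K]
    (φ : ℂ → (Nm →L[ℂ] Np))
    (U V : K →L[ℂ] K) (hUV : ∀ x, U (V x) = x) (hVU : ∀ x, V (U x) = x)
    (hadj : ∀ x y, inner ℂ (U x) y = inner ℂ x (V y))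
    (v : Np →ₗᵢ[ℂ] K) (w : Nm →ₗᵢ[ℂ] K)
    (hv : ∀ n : ℕ, ∀ a b, inner ℂ (v a) ((U ^ (n + 1)) (v b)) = 0)
    (hw : ∀ n : ℕ, ∀ a b, inner ℂ (w a) ((U ^ (n + 1)) (w b)) = 0)
    (hvw : ∀ n : ℕ, ∀ a b, inner ℂ ((U ^ (n + 1)) (v a)) (w b) = 0)
    (hφ : ∀ z : ℂ, ‖z‖ < 1 → ∀ a b,
      HasSum (fun n : ℕ => z ^ n * inner ℂ (v a) ((U ^ n) (w b))) (inner ℂ a (φ z b))) :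
    ∃ (X : Type u) (_ : NormedAddCommGroup X) (_ : InnerProductSpace ℂ X)
      (_ : CompleteSpace X) (_ : TopologicalSpace.SeparableSpace X)
      (A : X →L[ℂ] X) (B : Nm →L[ℂ] X) (C : X →L[ℂ] Np) (D : Nm →L[ℂ] Np),
      IsUnitaryOp (blockOp A B C D) ∧
        ∀ z ∈ ball (0 : ℂ) 1, IsUnit ((1 : X →L[ℂ] X) - z • A) ∧
          z • φ z = z • D + (z • C) ∘L (Ring.inverse (1 - z • A)) ∘L (z • B) := by
  have hadj' : ∀ x y, inner ℂ (V x) y = inner ℂ x (U y) := fun x y => by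
    rw [← inner_conj_symm, ← hadj, inner_conj_symm]
  have hadjn : ∀ (n : ℕ) x y, inner ℂ ((U ^ n) x) y = inner ℂ x ((V ^ n) y) := by
    intro n
    induction n with
    | zero => simp
    | succ n ih => intro x y; rw [pow_succ, pow_succ', mul_apply_eq_comp, ih,
        mul_apply_eq_comp, hadj]
  have hadjn' : ∀ (n : ℕ) x y, inner ℂ ((V ^ n) x) y = inner ℂ x ((U ^ n) y) := fun n x y => by
    rw [← inner_conj_symm, ← hadjn, inner_conj_symm]
  have hnU : ∀ x, ‖U x‖ = ‖x‖ := fun x => by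
    rw [@norm_eq_sqrt_re_inner ℂ, @norm_eq_sqrt_re_inner ℂ _ _ _ _ x, hadj, hVU]
  have hnUn : ∀ (n : ℕ) x, ‖(U ^ n) x‖ = ‖x‖ := by
    intro n
    induction n with
    | zero => simp
    | succ n ih => intro x; rw [pow_succ, mul_apply_eq_comp, ih, hnU]
  -- the adjoints of `v`, `w`
  let vs : K →L[ℂ] Np := adjoint v.toContinuousLinearMap
  let ws : K →L[ℂ] Nm := adjoint w.toContinuousLinearMap
  have hvs : ∀ a y, inner ℂ a (vs y) = inner ℂ (v a) y := fun a y =>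
    adjoint_inner_right v.toContinuousLinearMap a y
  have hws : ∀ a y, inner ℂ a (ws y) = inner ℂ (w a) y := fun a y =>
    adjoint_inner_right w.toContinuousLinearMap a y
  have hvsv : ∀ a, vs (v a) = a := fun a => ext_inner_left ℂ fun b => by
    rw [hvs, v.inner_map_map]
  have hwsw : ∀ a, ws (w a) = a := fun a => ext_inner_left ℂ fun b => by
    rw [hws, w.inner_map_map]
  -- the state space
  let S : Set K := {y | (∃ n a, y = (U ^ n) (v a)) ∨ (∃ n b, y = (V ^ (n + 1)) (w b))}
  let X : Submodule ℂ K := (Submodule.span ℂ S)ᗮ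
  have hX : ∀ x : K, x ∈ X ↔ (∀ (n : ℕ) a, inner ℂ ((U ^ n) (v a)) x = 0) ∧
      (∀ (n : ℕ) b, inner ℂ ((V ^ (n + 1)) (w b)) x = 0) := by
    intro x
    constructor
    · intro h
      refine ⟨fun n a => ?_, fun n b => ?_⟩
      · exact (Submodule.mem_orthogonal _ _).1 h _ (Submodule.subset_span (Or.inl ⟨n, a, rfl⟩))
      · exact (Submodule.mem_orthogonal _ _).1 h _ (Submodule.subset_span (Or.inr ⟨n, b, rfl⟩))
    · rintro ⟨h1, h2⟩
      rw [Submodule.mem_orthogonal]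
      intro y hy
      induction hy using Submodule.span_induction with
      | mem y hy =>
        rcases hy with ⟨n, a, rfl⟩ | ⟨n, b, rfl⟩
        · exact h1 n a
        · exact h2 n b
      | zero => simp
      | add a b _ _ ha hb => rw [inner_add_left, ha, hb, add_zero]
      | smul c a _ ha => rw [inner_smul_left, ha, mul_zero]
  have hX0 : ∀ (x : X) a, inner ℂ (v a) (x : K) = 0 := fun x a => by
    simpa using ((hX x).1 x.2).1 0 a
  have hX1 : ∀ (x : X) b, inner ℂ (w b) (U (x : K)) = 0 := fun x b => by
    rw [← hadj']; simpa using ((hX x).1 x.2).2 0 b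
  -- the intermediate space `Y`
  let Y : K → Prop := fun y => (∀ (n : ℕ) a, inner ℂ ((U ^ (n + 1)) (v a)) y = 0) ∧
      (∀ (n : ℕ) b, inner ℂ ((V ^ (n + 1)) (w b)) y = 0)
  have hYU : ∀ (x : X) u, Y (U x + w u) := by
    intro x u
    obtain ⟨h1, h2⟩ := (hX x).1 x.2
    refine ⟨fun n a => ?_, fun n b => ?_⟩
    · rw [inner_add_right, hvw, add_zero, ← hadj', pow_succ', mul_apply_eq_comp, hVU,
        h1]
    · rw [inner_add_right, hadjn' _ _ (w u), hw, add_zero, ← hadj',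
        ← mul_apply_eq_comp, ← pow_succ', h2]
  have hYX : ∀ (x : X) p, Y ((x : K) + v p) := by
    intro x u
    obtain ⟨h1, h2⟩ := (hX x).1 x.2
    refine ⟨fun n a => ?_, fun n b => ?_⟩
    · rw [inner_add_right, h1, zero_add, ← inner_conj_symm, hv, map_zero]
    · rw [inner_add_right, h2, zero_add, hadjn', ← inner_conj_symm, hvw, map_zero]
  have hYsub : ∀ y, Y y → y - v (vs y) ∈ X := by
    rintro y ⟨h1, h2⟩
    rw [hX]
    refine ⟨fun n a => ?_, fun n b => ?_⟩
    · rcases n with _ | n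
      · rw [inner_sub_right, pow_zero, one_apply_eq_self, v.inner_map_map, hvs,
          sub_self]
      · rw [inner_sub_right, h1, zero_sub, ← inner_conj_symm, hv, map_zero, neg_zero]
    · rw [inner_sub_right, h2, zero_sub, hadjn', ← inner_conj_symm, hvw, map_zero, neg_zero]
  have hYsub' : ∀ y, Y y → V (y - w (ws y)) ∈ X := by
    rintro y ⟨h1, h2⟩
    rw [hX]
    refine ⟨fun n a => ?_, fun n b => ?_⟩
    · rw [← hadj, ← mul_apply_eq_comp, ← pow_succ', inner_sub_right, h1, hvw, sub_zero]
    · rw [← hadj, pow_succ', mul_apply_eq_comp, hUV, inner_sub_right]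
      rcases n with _ | n
      · rw [pow_zero, one_apply_eq_self, w.inner_map_map, hws, sub_self]
      · rw [h2, zero_sub, hadjn', hw, neg_zero]
  let P : K →L[ℂ] X := X.orthogonalProjectionOnto
  have hP : ∀ (x : X) p, P ((x : K) + v p) = x := by
    intro x p
    have h0 : v p ∈ Xᗮ := by
      rw [Submodule.mem_orthogonal]
      intro u hu
      rw [← inner_conj_symm, hX0 ⟨u, hu⟩, map_zero]
    have h1 : P (v p) = 0 := Submodule.orthogonalProjectionOnto_apply_of_mem_orthogonal h0
    have h2 : P (x : K) = x := Submodule.orthogonalProjectionOnto_mem_subspace_eq_self x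
    rw [map_add, h1, h2, add_zero]
  have hvsx : ∀ (x : X) p, vs ((x : K) + v p) = p := by
    intro x p
    have : vs (x : K) = 0 := ext_inner_left ℂ fun a => by rw [hvs, hX0, inner_zero_right]
    rw [map_add, hvsv, this, zero_add]
  have hdec : ∀ y, Y y → y = (P y : K) + v (vs y) := by
    intro y hy
    have := hP ⟨_, hYsub y hy⟩ (vs y)
    simp only [sub_add_cancel] at this
    rw [this]; simp
  let A : X →L[ℂ] X := P ∘L U ∘L X.subtypeL
  let B : Nm →L[ℂ] X := P ∘L w.toContinuousLinearMap
  let C : X →L[ℂ] Np := vs ∘L U ∘L X.subtypeL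
  let D : Nm →L[ℂ] Np := vs ∘L w.toContinuousLinearMap
  have hAB : ∀ x u, A x + B u = P (U x + w u) := fun x u => by rw [map_add]; rfl
  have hCD : ∀ x u, C x + D u = vs (U x + w u) := fun x u => by rw [map_add]; rfl
  have hG : IsUnitaryOp (blockOp A B C D) := by
    apply isUnitaryOp_of_norm_surj
    · intro x
      have e1 : ‖blockOp A B C D x‖ ^ 2 = ‖x‖ ^ 2 := by
        rw [WithLp.prod_norm_sq_eq_of_L2, WithLp.prod_norm_sq_eq_of_L2, blockOp_apply]
        change ‖A x.fst + B x.snd‖ ^ 2 + ‖C x.fst + D x.snd‖ ^ 2 = _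
        rw [hAB, hCD]
        have h1 := hdec _ (hYU x.fst x.snd)
        generalize hy : U (x.fst : K) + w x.snd = y at *
        have h2 : ‖y‖ ^ 2 = ‖x.fst‖ ^ 2 + ‖x.snd‖ ^ 2 := by
          rw [← hy, sq, norm_add_sq_eq_norm_sq_add_norm_sq_of_inner_eq_zero (𝕜 := ℂ), hnU,
            w.norm_map, ← sq, ← sq]
          · rfl
          · rw [← inner_conj_symm, hX1, map_zero]
        rw [← h2]
        conv_rhs => rw [h1, sq, norm_add_sq_eq_norm_sq_add_norm_sq_of_inner_eq_zero (𝕜 := ℂ) _ _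
          (by rw [← inner_conj_symm, hX0, map_zero]), v.norm_map, ← sq, ← sq]
        rfl
      exact (sq_eq_sq₀ (norm_nonneg _) (norm_nonneg _)).1 e1
    · intro t
      have hy := hYX t.fst t.snd
      refine ⟨WithLp.toLp 2 (⟨_, hYsub' _ hy⟩, ws ((t.fst : K) + v t.snd)), ?_⟩
      rw [blockOp_apply]
      simp only [WithLp.toLp_fst, WithLp.toLp_snd, hAB, hCD, hUV, sub_add_cancel, hP, hvsx]
      rfl
  have hA : ‖A‖ ≤ 1 := by
    refine ContinuousLinearMap.opNorm_le_bound _ zero_le_one fun x => ?_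
    rw [one_mul]
    refine (X.norm_orthogonalProjectionOnto_apply_le _).trans ?_
    exact (hnU _).le
  refine ⟨X, inferInstance, inferInstance, inferInstance, inferInstance, A, B, C, D, hG, ?_⟩
  intro z hz
  have hz : ‖z‖ < 1 := by simpa using hz
  have hu : IsUnit ((1 : X →L[ℂ] X) - z • A) := isUnit_one_sub_smul A hA z hz
  refine ⟨hu, ?_⟩
  ext u
  set x : X := Ring.inverse (1 - z • A) (z • B u) with hx
  have h1 : x = z • (A x + B u) := by
    have := congrArg (fun T : X →L[ℂ] X => T (z • B u)) (Ring.mul_inverse_cancel _ hu)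
    simp only [mul_apply_eq_comp, one_apply_eq_self,
      _root_.sub_apply, _root_.smul_apply, ← hx] at this
    rw [smul_add, ← this]; abel
  have h6 : (z • D + (z • C) ∘L (Ring.inverse (1 - z • A)) ∘L (z • B)) u = z • (C x + D u) := by
    simp only [_root_.add_apply, _root_.smul_apply, ContinuousLinearMap.comp_apply, ← hx, smul_add]; rw [add_comm]
  rw [h6]
  set p := C x + D u with hp
  rw [_root_.smul_apply]
  rcases eq_or_ne z 0 with rfl | hz0
  · simp
  congr 1
  have h7 : (x : K) - z • U x = z • w u - z • v p := by
    have e1 := hdec _ (hYU x u)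
    rw [← hAB, ← hCD, ← hp] at e1
    have e2 : (x : K) = z • ((A x + B u : X) : K) := by
      conv_lhs => rw [h1]
      rfl
    have e3 : ((A x + B u : X) : K) = U x + w u - v p := by rw [e1]; simp
    rw [e3] at e2
    rw [sub_eq_iff_eq_add]
    conv_lhs => rw [e2]
    rw [smul_sub, smul_add]; abel
  refine ext_inner_left ℂ fun a => ?_
  -- telescoping
  have s1 : Tendsto (fun N : ℕ => ∑ n ∈ Finset.range N,
      z ^ n * inner ℂ (v a) ((U ^ n) ((x : K) - z • U x))) atTop (𝓝 0) := by
    have e : ∀ N : ℕ, ∑ n ∈ Finset.range N,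
      z ^ n * inner ℂ (v a) ((U ^ n) ((x : K) - z • U x)) =
        - (z ^ N * inner ℂ (v a) ((U ^ N) (x : K))) := by
      intro N
      induction N with
      | zero => simp [hX0]
      | succ N ih =>
        rw [Finset.sum_range_succ, ih, map_sub, map_smul, inner_sub_right, inner_smul_right,
          pow_succ U, mul_apply_eq_comp]
        ring
    simp_rw [e]
    rw [← neg_zero]
    refine Tendsto.neg ?_
    refine squeeze_zero_norm (a := fun N => ‖z‖ ^ N * (‖v a‖ * ‖(x : K)‖)) (fun N => ?_) ?_
    · rw [norm_mul, norm_pow]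
      gcongr
      refine (norm_inner_le_norm _ _).trans ?_
      rw [hnUn]
    · simpa using (tendsto_pow_atTop_nhds_zero_of_lt_one (norm_nonneg z) hz).mul_const
        (‖v a‖ * ‖(x : K)‖)
  have s2 : HasSum (fun n : ℕ => z ^ n * inner ℂ (v a) ((U ^ n) (v p))) (inner ℂ a p) := by
    have := hasSum_single (f := fun n : ℕ => z ^ n * inner ℂ (v a) ((U ^ n) (v p))) 0 (by
      intro n hn
      obtain ⟨m, rfl⟩ := Nat.exists_eq_succ_of_ne_zero hn
      change z ^ (m + 1) * inner ℂ (v a) ((U ^ (m + 1)) (v p)) = 0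
      rw [hv, mul_zero])
    simpa using this
  have s3 := (((hφ z hz a u).mul_left z).sub (s2.mul_left z)).tendsto_sum_nat
  rw [h7] at s1
  have s4 := tendsto_nhds_unique s1 (s3.congr fun N => Finset.sum_congr rfl fun n _ => by
    simp only [map_sub, map_smul, inner_sub_right, inner_smul_right]; ring)
  have s5 : z * (inner ℂ a (φ z u) - inner ℂ a p) = 0 := by rw [s4]; ring
  have s6 := (mul_eq_zero.1 s5).resolve_left hz0
  exact sub_eq_zero.1 s6

lemma exists_defect {E F : Type*}
    [NormedAddCommGroup E] [InnerProductSpace ℂ E] [CompleteSpace E]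
    [NormedAddCommGroup F] [InnerProductSpace ℂ F] [CompleteSpace F]
    (L : E →L[ℂ] F) (hL : ‖L‖ ≤ 1) :
    ∃ Q : E →L[ℂ] E, (∀ x, ‖L x‖ ^ 2 + ‖Q x‖ ^ 2 = ‖x‖ ^ 2) ∧
      ∀ T : E →L[ℂ] E, Commute (adjoint L ∘L L) T → Commute Q T := by
  let R : E →L[ℂ] E := 1 - adjoint L ∘L L
  have hR : 0 ≤ R := by
    rw [ContinuousLinearMap.nonneg_iff_isPositive, ContinuousLinearMap.isPositive_iff_complex]
    intro x
    have h1 : inner ℂ (R x) x = ((‖x‖ ^ 2 - ‖L x‖ ^ 2 : ℝ) : ℂ) := by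
      change inner ℂ (x - adjoint L (L x)) x = _
      rw [inner_sub_left, adjoint_inner_left, inner_self_eq_norm_sq_to_K,
        inner_self_eq_norm_sq_to_K]
      push_cast
      rfl
    have h2 : ‖L x‖ ≤ ‖x‖ := (L.le_of_opNorm_le hL x).trans (by simp)
    have h3 : ‖L x‖ ^ 2 ≤ ‖x‖ ^ 2 := by gcongr
    rw [h1]
    refine ⟨rfl, ?_⟩
    change 0 ≤ ‖x‖ ^ 2 - ‖L x‖ ^ 2
    linarith
  let Q : E →L[ℂ] E := CFC.sqrt R
  have hQ : Q * Q = R := CFC.sqrt_mul_sqrt_self R hR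
  have hQs : adjoint Q = Q := (IsSelfAdjoint.of_nonneg (CFC.sqrt_nonneg R)).star_eq
  refine ⟨Q, fun x => ?_, fun T hT => ?_⟩
  · have h1 : inner ℂ (Q x) (Q x) = inner ℂ (R x) x := by
      rw [← adjoint_inner_left, hQs, ← mul_apply_eq_comp, hQ]
    have h2 : inner ℂ (R x) x = ((‖x‖ ^ 2 - ‖L x‖ ^ 2 : ℝ) : ℂ) := by
      change inner ℂ (x - adjoint L (L x)) x = _
      rw [inner_sub_left, adjoint_inner_left, inner_self_eq_norm_sq_to_K,
        inner_self_eq_norm_sq_to_K]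
      push_cast
      rfl
    rw [h2, inner_self_eq_norm_sq_to_K] at h1
    have h3 : ‖Q x‖ ^ 2 = ‖x‖ ^ 2 - ‖L x‖ ^ 2 := by
      have : ((‖Q x‖ ^ 2 : ℝ) : ℂ) = ((‖x‖ ^ 2 - ‖L x‖ ^ 2 : ℝ) : ℂ) := by
        rw [← h1]; push_cast; rfl
      exact_mod_cast this
    rw [h3]; ring
  · have hRT : Commute R T := (Commute.one_left T).sub_left hT
    exact hRT.cfcₙ_nnreal _

lemma realization_of_symbol.{u} {Nm Np E F : Type u}
    [NormedAddCommGroup Nm] [InnerProductSpace ℂ Nm] [CompleteSpace Nm]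
    [NormedAddCommGroup Np] [InnerProductSpace ℂ Np] [CompleteSpace Np]
    [NormedAddCommGroup E] [InnerProductSpace ℂ E] [CompleteSpace E]
    [TopologicalSpace.SeparableSpace E]
    [NormedAddCommGroup F] [InnerProductSpace ℂ F] [CompleteSpace F]
    [TopologicalSpace.SeparableSpace F]
    (φ : ℂ → (Nm →L[ℂ] Np))
    (UE VE : E →L[ℂ] E) (hUVE : ∀ x, UE (VE x) = x) (hVUE : ∀ x, VE (UE x) = x)
    (hadjE : ∀ x y, inner ℂ (UE x) y = inner ℂ x (VE y))
    (UF VF : F →L[ℂ] F) (hUVF : ∀ x, UF (VF x) = x) (hVUF : ∀ x, VF (UF x) = x)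
    (hadjF : ∀ x y, inner ℂ (UF x) y = inner ℂ x (VF y))
    (L : E →L[ℂ] F) (hL : ‖L‖ ≤ 1) (hLU : ∀ x, L (UE x) = UF (L x))
    (cF : Np →ₗᵢ[ℂ] F) (cE : Nm →ₗᵢ[ℂ] E)
    (hF : ∀ n : ℕ, ∀ a b, inner ℂ (cF a) ((UF ^ (n + 1)) (cF b)) = 0)
    (hE : ∀ n : ℕ, ∀ a b, inner ℂ (cE a) ((UE ^ (n + 1)) (cE b)) = 0)
    (hFE : ∀ n : ℕ, ∀ a b, inner ℂ ((UF ^ (n + 1)) (cF a)) (L (cE b)) = 0)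
    (hφ : ∀ z : ℂ, ‖z‖ < 1 → ∀ a b,
      HasSum (fun n : ℕ => z ^ n * inner ℂ (cF a) ((UF ^ n) (L (cE b)))) (inner ℂ a (φ z b))) :
    ∃ (X : Type u) (_ : NormedAddCommGroup X) (_ : InnerProductSpace ℂ X)
      (_ : CompleteSpace X) (_ : TopologicalSpace.SeparableSpace X)
      (A : X →L[ℂ] X) (B : Nm →L[ℂ] X) (C : X →L[ℂ] Np) (D : Nm →L[ℂ] Np),
      IsUnitaryOp (blockOp A B C D) ∧
        ∀ z ∈ ball (0 : ℂ) 1, IsUnit ((1 : X →L[ℂ] X) - z • A) ∧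
          z • φ z = z • D + (z • C) ∘L (Ring.inverse (1 - z • A)) ∘L (z • B) := by
  obtain ⟨Q, hQ, hQc⟩ := exists_defect L hL
  have hLV : ∀ x, L (VE x) = VF (L x) := fun x => by
    rw [← hVUF (L (VE x)), ← hLU, hUVE]
  have hLs : ∀ y, adjoint L (UF y) = UE (adjoint L y) := fun y =>
    ext_inner_right ℂ fun x => by
      rw [adjoint_inner_left, hadjF, ← hLV, hadjE, adjoint_inner_left]
  have hQU : ∀ x, Q (UE x) = UE (Q x) := by
    have : Commute Q UE := hQc UE (by
      ext x
      change adjoint L (L (UE x)) = UE (adjoint L (L x))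
      rw [hLU, hLs])
    intro x
    exact congrArg (fun T : E →L[ℂ] E => T x) this.eq
  let K := WithLp 2 (F × E)
  let U : K →L[ℂ] K := blockOp UF 0 0 UE
  let V : K →L[ℂ] K := blockOp VF 0 0 VE
  have hU : ∀ f g, U (WithLp.toLp 2 (f, g)) = WithLp.toLp 2 (UF f, UE g) := by
    intro f g
    change WithLp.toLp 2 (UF f + 0, 0 + UE g) = _
    rw [add_zero, zero_add]
  have hV : ∀ f g, V (WithLp.toLp 2 (f, g)) = WithLp.toLp 2 (VF f, VE g) := by
    intro f g
    change WithLp.toLp 2 (VF f + 0, 0 + VE g) = _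
    rw [add_zero, zero_add]
  have hUn : ∀ (n : ℕ) f g, (U ^ n) (WithLp.toLp 2 (f, g)) =
      WithLp.toLp 2 ((UF ^ n) f, (UE ^ n) g) := by
    intro n
    induction n with
    | zero => intro f g; rfl
    | succ n ih =>
      intro f g
      rw [pow_succ, mul_apply_eq_comp, hU, ih, pow_succ, pow_succ]; rfl
  have hin : ∀ f g f' g', inner ℂ (WithLp.toLp 2 (f, g) : K) (WithLp.toLp 2 (f', g')) =
      inner ℂ f f' + inner ℂ g g' := fun f g f' g' => WithLp.prod_inner_apply _ _
  let W : E →ₗᵢ[ℂ] K :=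
    { toFun := fun x => WithLp.toLp 2 (L x, Q x)
      map_add' := fun x y => by rw [map_add, map_add]; rfl
      map_smul' := fun a x => by rw [map_smul, map_smul]; rfl
      norm_map' := fun x => by
        refine (sq_eq_sq₀ (norm_nonneg _) (norm_nonneg _)).1 ?_
        rw [WithLp.prod_norm_sq_eq_of_L2]
        exact hQ x }
  have hW : ∀ x, W x = WithLp.toLp 2 (L x, Q x) := fun x => rfl
  let J : F →ₗᵢ[ℂ] K :=
    { toFun := fun x => WithLp.toLp 2 (x, 0)
      map_add' := fun x y => by rw [← WithLp.toLp_add]; simp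
      map_smul' := fun a x => by rw [RingHom.id_apply, ← WithLp.toLp_smul]; simp
      norm_map' := fun x => by
        refine (sq_eq_sq₀ (norm_nonneg _) (norm_nonneg _)).1 ?_
        rw [WithLp.prod_norm_sq_eq_of_L2]
        simp }
  have hJ : ∀ x, J x = WithLp.toLp 2 (x, 0) := fun x => rfl
  have hWn : ∀ (n : ℕ) x, (U ^ n) (W x) = W ((UE ^ n) x) := by
    intro n
    induction n with
    | zero => intro x; rfl
    | succ n ih =>
      intro x
      rw [pow_succ, pow_succ, mul_apply_eq_comp, mul_apply_eq_comp, ← ih, hW, hW, hU, hLU, hQU]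
  refine abstract_realization (K := K) φ U V ?_ ?_ ?_ (J.comp cF) (W.comp cE) ?_ ?_ ?_ ?_
  · rintro ⟨f, g⟩; rw [hV, hU, hUVF, hUVE]
  · rintro ⟨f, g⟩; rw [hU, hV, hVUF, hVUE]
  · rintro ⟨f, g⟩ ⟨f', g'⟩; rw [hU, hV, hin, hin, hadjF, hadjE]
  · intro n a b
    change inner ℂ (J (cF a)) ((U ^ (n + 1)) (J (cF b))) = 0
    rw [hJ, hJ, hUn, hin, hF, inner_zero_left, add_zero]
  · intro n a b
    change inner ℂ (W (cE a)) ((U ^ (n + 1)) (W (cE b))) = 0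
    rw [hWn, W.inner_map_map, hE]
  · intro n a b
    change inner ℂ ((U ^ (n + 1)) (J (cF a))) (W (cE b)) = 0
    rw [hJ, hUn, hW, hin, hFE, map_zero, inner_zero_left, add_zero]
  · intro z hz a b
    have e : ∀ n : ℕ, z ^ n * inner ℂ ((J.comp cF) a) ((U ^ n) ((W.comp cE) b)) =
        z ^ n * inner ℂ (cF a) ((UF ^ n) (L (cE b))) := by
      intro n
      change z ^ n * inner ℂ (J (cF a)) ((U ^ n) (W (cE b))) = _
      rw [hJ, hW, hUn, hin, inner_zero_left, add_zero]
    simp_rw [e]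
    exact hφ z hz a b

lemma hasSum_congr_aux {f g : ℕ → ℂ} {a : ℂ} (h : ∀ n, f n = g n) : HasSum f a ↔ HasSum g a := by
  rw [funext h]

section circle

open MeasureTheory AddCircle


lemma exists_mulOp {E F : Type*}
    [NormedAddCommGroup E] [InnerProductSpace ℂ E]
    [NormedAddCommGroup F] [InnerProductSpace ℂ F]
    (g : AddCircle (1 : ℝ) → E →L[ℂ] F) (hg : Continuous g) (hb : ∀ t, ‖g t‖ ≤ 1) :
    ∃ M : Lp E 2 (haarAddCircle : Measure (AddCircle (1 : ℝ))) →L[ℂ] Lp F 2 (haarAddCircle : Measure (AddCircle (1 : ℝ))), ‖M‖ ≤ 1 ∧ ∀ f, M f =ᵐ[(haarAddCircle : Measure (AddCircle (1 : ℝ)))] fun t => g t (f t) := by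
  have hm : MemLp g ⊤ (haarAddCircle : Measure (AddCircle (1 : ℝ))) := memLp_top_of_bound hg.aestronglyMeasurable 1 (ae_of_all _ hb)
  let G : Lp (E →L[ℂ] F) ⊤ (haarAddCircle : Measure (AddCircle (1 : ℝ))) := hm.toLp g
  have key : ∀ f : Lp E 2 (haarAddCircle : Measure (AddCircle (1 : ℝ))), (ContinuousLinearMap.id ℂ (E →L[ℂ] F)).holderL (haarAddCircle : Measure (AddCircle (1 : ℝ))) ⊤ 2 2 G f
      =ᵐ[(haarAddCircle : Measure (AddCircle (1 : ℝ)))] fun t => g t (f t) := by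
    intro f
    refine ((ContinuousLinearMap.id ℂ (E →L[ℂ] F)).coeFn_holder (r := 2) G f).trans ?_
    filter_upwards [hm.coeFn_toLp] with t ht
    simp only [G, ht, ContinuousLinearMap.id_apply]
  refine ⟨(ContinuousLinearMap.id ℂ (E →L[ℂ] F)).holderL (haarAddCircle : Measure (AddCircle (1 : ℝ))) ⊤ 2 2 G, ?_, key⟩
  refine ContinuousLinearMap.opNorm_le_bound _ zero_le_one fun f => ?_
  rw [one_mul]
  refine Lp.norm_le_norm_of_ae_le ?_
  filter_upwards [key f] with t ht
  rw [ht]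
  exact ((g t).le_of_opNorm_le (hb t) _).trans (by simp)

lemma integral_fourier_pow (k n : ℕ) :
    ∫ t, (fourier 1 t : ℂ) ^ k * (starRingEnd ℂ (fourier 1 t)) ^ n ∂(haarAddCircle : Measure (AddCircle (1 : ℝ))) =
      if k = n then 1 else 0 := by
  have h1 : ∀ (m : ℕ) (t : AddCircle (1 : ℝ)), (fourier 1 t : ℂ) ^ m = fourier (m : ℤ) t := by
    intro m t
    induction m with
    | zero => simp
    | succ m ih => rw [pow_succ, ih, Nat.cast_succ, fourier_add]
  have h2 : ∀ t : AddCircle (1 : ℝ), (fourier 1 t : ℂ) ^ k * (starRingEnd ℂ (fourier 1 t)) ^ n =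
      fourier ((k : ℤ) + -(n : ℤ)) t := by
    intro t
    rw [fourier_add, fourier_neg, ← h1, ← h1, map_pow]
  simp_rw [h2]
  split_ifs with h
  · simp [h]
  · have hij : (k : ℤ) + -(n : ℤ) ≠ 0 := by omega
    exact integral_eq_zero_of_add_right_eq_neg (μ := haarAddCircle)
      (fourier_add_half_inv_index hij one_pos)

lemma norm_fourier_one (t : AddCircle (1 : ℝ)) : ‖(fourier 1 t : ℂ)‖ = 1 := by
  rw [fourier_one]; exact Circle.norm_coe _

lemma hasSum_coeff (f : ℂ → ℂ) (hf : DifferentiableOn ℂ f (ball 0 1)) (r : ℝ) (hr : 0 ≤ r)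
    (hr1 : r < 1) (k n : ℕ) :
    HasSum (fun m : ℕ => (r : ℂ) ^ m * ((m.factorial : ℂ)⁻¹ * iteratedDeriv m f 0) *
        (if m + k = n then 1 else 0))
      (∫ t, (fourier 1 t : ℂ) ^ k * (starRingEnd ℂ (fourier 1 t)) ^ n *
        f (r * fourier 1 t) ∂(haarAddCircle : Measure (AddCircle (1 : ℝ)))) := by
  set c : ℕ → ℂ := fun m => (m.factorial : ℂ)⁻¹ * iteratedDeriv m f 0 with hc
  have hT : ∀ z ∈ ball (0 : ℂ) 1, HasSum (fun m : ℕ => z ^ m * c m) (f z) := by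
    intro z hz
    have := Complex.hasSum_taylorSeries_on_ball hf hz
    simp only [sub_zero, smul_eq_mul] at this
    refine (hasSum_congr_aux fun m => ?_).mpr this
    simp only [hc]
    ring
  have hnorm : ∀ t : AddCircle (1 : ℝ), (r * fourier 1 t : ℂ) ∈ ball (0 : ℂ) 1 := by
    intro t
    rw [mem_ball_zero_iff, norm_mul, norm_fourier_one, mul_one, Complex.norm_real,
      Real.norm_of_nonneg hr]
    exact hr1
  have hsum : Summable fun m : ℕ => r ^ m * ‖c m‖ := by
    have := (hT (r : ℂ) (by simpa [abs_of_nonneg hr] using hr1)).summable.norm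
    simpa [abs_of_nonneg hr] using this
  have hcont : Continuous fun t : AddCircle (1 : ℝ) => (fourier 1 t : ℂ) := (fourier 1).continuous
  have := hasSum_integral_of_dominated_convergence (μ := (haarAddCircle : Measure (AddCircle (1 : ℝ))))
    (F := fun m t => (fourier 1 t : ℂ) ^ k * (starRingEnd ℂ (fourier 1 t)) ^ n *
        ((r * fourier 1 t) ^ m * c m))
    (f := fun t => (fourier 1 t : ℂ) ^ k * (starRingEnd ℂ (fourier 1 t)) ^ n *
        f (r * fourier 1 t))
    (fun m _ => r ^ m * ‖c m‖)
    (fun m => by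
      refine Continuous.aestronglyMeasurable ?_
      have := Complex.continuous_conj.comp hcont
      fun_prop)
    (fun m => ae_of_all _ fun t => by
      simp only [norm_mul, norm_pow, norm_fourier_one, RCLike.norm_conj, Complex.norm_real,
        Real.norm_of_nonneg hr]
      simp)
    (ae_of_all _ fun _ => hsum) (integrable_const _)
    (ae_of_all _ fun t => (hT _ (hnorm t)).mul_left _)
  refine (hasSum_congr_aux fun m => ?_).mpr this
  rw [← integral_fourier_pow, ← integral_const_mul]
  congr 1
  ext t
  ring

/-- The embedding as constant functions. -/
lemma exists_constEmb (E : Type*) [NormedAddCommGroup E] [InnerProductSpace ℂ E] :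
    ∃ c : E →ₗᵢ[ℂ] Lp E 2 (haarAddCircle : Measure (AddCircle (1 : ℝ))), ∀ a, c a =ᵐ[(haarAddCircle : Measure (AddCircle (1 : ℝ)))] fun _ => a := by
  refine ⟨⟨Lp.constₗ 2 (haarAddCircle : Measure (AddCircle (1 : ℝ))) ℂ, fun x => ?_⟩, fun a => Lp.coeFn_const _ _ _⟩
  change ‖Lp.const 2 (haarAddCircle : Measure (AddCircle (1 : ℝ))) x‖ = ‖x‖
  rw [Lp.norm_const]
  · simp
  · simp

lemma exists_shift (E : Type*) [NormedAddCommGroup E] [InnerProductSpace ℂ E] :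
    ∃ U V : Lp E 2 (haarAddCircle : Measure (AddCircle (1 : ℝ))) →L[ℂ] Lp E 2 (haarAddCircle : Measure (AddCircle (1 : ℝ))),
      (∀ f, U f =ᵐ[(haarAddCircle : Measure (AddCircle (1 : ℝ)))] fun t => (starRingEnd ℂ (fourier 1 t)) • f t) ∧
      (∀ f, V f =ᵐ[(haarAddCircle : Measure (AddCircle (1 : ℝ)))] fun t => (fourier 1 t : ℂ) • f t) ∧
      (∀ x, U (V x) = x) ∧ (∀ x, V (U x) = x) ∧
      (∀ x y, inner ℂ (U x) y = inner ℂ x (V y)) ∧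
      (∀ (n : ℕ) f, (U ^ n) f =ᵐ[(haarAddCircle : Measure (AddCircle (1 : ℝ)))] fun t => ((starRingEnd ℂ (fourier 1 t)) ^ n) • f t) ∧
      (∀ (n : ℕ) f, (V ^ n) f =ᵐ[(haarAddCircle : Measure (AddCircle (1 : ℝ)))] fun t => ((fourier 1 t : ℂ) ^ n) • f t) := by
  have hcont : Continuous fun t : AddCircle (1 : ℝ) => (fourier 1 t : ℂ) := (fourier 1).continuous
  have hcont' : Continuous fun t : AddCircle (1 : ℝ) => starRingEnd ℂ (fourier 1 t : ℂ) :=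
    Complex.continuous_conj.comp hcont
  have hle : ‖ContinuousLinearMap.id ℂ E‖ ≤ 1 := ContinuousLinearMap.norm_id_le
  obtain ⟨U, -, hU⟩ := exists_mulOp (fun t => (starRingEnd ℂ (fourier 1 t)) •
    ContinuousLinearMap.id ℂ E) (by fun_prop) (fun t => by
      rw [norm_smul, RCLike.norm_conj, norm_fourier_one, one_mul]; exact hle)
  obtain ⟨V, -, hV⟩ := exists_mulOp (fun t => (fourier 1 t : ℂ) •
    ContinuousLinearMap.id ℂ E) (by fun_prop) (fun t => by
      rw [norm_smul, norm_fourier_one, one_mul]; exact hle)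
  have hee : ∀ t : AddCircle (1 : ℝ), (starRingEnd ℂ (fourier 1 t : ℂ)) * fourier 1 t = 1 := fun t => by
    rw [Complex.conj_mul', norm_fourier_one]; simp
  have hU' : ∀ f, U f =ᵐ[(haarAddCircle : Measure (AddCircle (1 : ℝ)))] fun t => (starRingEnd ℂ (fourier 1 t)) • f t := hU
  have hV' : ∀ f, V f =ᵐ[(haarAddCircle : Measure (AddCircle (1 : ℝ)))] fun t => (fourier 1 t : ℂ) • f t := hV
  refine ⟨U, V, hU', hV', ?_, ?_, ?_, ?_, ?_⟩
  · intro x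
    apply Lp.ext
    filter_upwards [hU' (V x), hV' x] with t h1 h2
    rw [h1, h2, smul_smul, hee, one_smul]
  · intro x
    apply Lp.ext
    filter_upwards [hV' (U x), hU' x] with t h1 h2
    rw [h1, h2, smul_smul, mul_comm, hee, one_smul]
  · intro x y
    rw [L2.inner_def, L2.inner_def]
    apply integral_congr_ae
    filter_upwards [hU' x, hV' y] with t h1 h2
    rw [h1, h2, inner_smul_left, inner_smul_right, Complex.conj_conj]
  · intro n
    induction n with
    | zero => intro f; simp
    | succ n ih =>
      intro f
      rw [pow_succ', mul_apply_eq_comp]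
      filter_upwards [hU' ((U ^ n) f), ih f] with t h1 h2
      rw [h1, h2, smul_smul, pow_succ']
  · intro n
    induction n with
    | zero => intro f; simp
    | succ n ih =>
      intro f
      rw [pow_succ', mul_apply_eq_comp]
      filter_upwards [hV' ((V ^ n) f), ih f] with t h1 h2
      rw [h1, h2, smul_smul, pow_succ']

lemma realization_of_schur.{u} {Nm Np : Type u}
    [NormedAddCommGroup Nm] [InnerProductSpace ℂ Nm] [CompleteSpace Nm]
    [TopologicalSpace.SeparableSpace Nm]
    [NormedAddCommGroup Np] [InnerProductSpace ℂ Np] [CompleteSpace Np]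
    [TopologicalSpace.SeparableSpace Np]
    (φ : ℂ → (Nm →L[ℂ] Np)) (hd : DifferentiableOn ℂ φ (ball (0 : ℂ) 1))
    (hb : ∀ z ∈ ball (0 : ℂ) 1, ‖φ z‖ ≤ 1) :
    ∃ (X : Type u) (_ : NormedAddCommGroup X) (_ : InnerProductSpace ℂ X)
      (_ : CompleteSpace X) (_ : TopologicalSpace.SeparableSpace X)
      (A : X →L[ℂ] X) (B : Nm →L[ℂ] X) (C : X →L[ℂ] Np) (D : Nm →L[ℂ] Np),
      IsUnitaryOp (blockOp A B C D) ∧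
        ∀ z ∈ ball (0 : ℂ) 1, IsUnit ((1 : X →L[ℂ] X) - z • A) ∧
          z • φ z = z • D + (z • C) ∘L (Ring.inverse (1 - z • A)) ∘L (z • B) := by
  have : SecondCountableTopology Nm := UniformSpace.secondCountable_of_separable Nm
  have : SecondCountableTopology Np := UniformSpace.secondCountable_of_separable Np
  have : Fact ((2 : ENNReal) ≠ ⊤) := ⟨by simp⟩
  obtain ⟨UE, VE, hUE, hVE, hUVE, hVUE, hadjE, hUEn, hVEn⟩ := exists_shift Nm
  obtain ⟨UF, VF, hUF, hVF, hUVF, hVUF, hadjF, hUFn, hVFn⟩ := exists_shift Np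
  obtain ⟨cE, hcE⟩ := exists_constEmb Nm
  obtain ⟨cF, hcF⟩ := exists_constEmb Np
  let r : ℕ → ℝ := fun j => 1 - 1 / ((j : ℝ) + 1)
  have hr0 : ∀ j, 0 ≤ r j := fun j => by
    have : 1 / ((j : ℝ) + 1) ≤ 1 := by
      rw [div_le_one (by positivity)]
      have : (0 : ℝ) ≤ j := Nat.cast_nonneg j
      linarith
    simp only [r]
    linarith
  have hr1 : ∀ j, r j < 1 := fun j => by
    have : 0 < 1 / ((j : ℝ) + 1) := by positivity
    simp only [r]
    linarith
  have hrlim : Tendsto r (hyperfilter ℕ : Filter ℕ) (𝓝 1) := by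
    have : Tendsto r atTop (𝓝 (1 - 0)) :=
      tendsto_const_nhds.sub tendsto_one_div_add_atTop_nhds_zero_nat
    rw [sub_zero] at this
    exact this.mono_left Nat.hyperfilter_le_atTop
  have hmem : ∀ j (t : AddCircle (1 : ℝ)), ((r j : ℂ) * fourier 1 t) ∈ ball (0 : ℂ) 1 := by
    intro j t
    rw [mem_ball_zero_iff, norm_mul, norm_fourier_one, mul_one, Complex.norm_real,
      Real.norm_of_nonneg (hr0 j)]
    exact hr1 j
  have hcont : Continuous fun t : AddCircle (1 : ℝ) => (fourier 1 t : ℂ) := (fourier 1).continuous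
  have hM : ∀ j, ∃ M : Lp Nm 2 (haarAddCircle : Measure (AddCircle (1 : ℝ))) →L[ℂ] Lp Np 2 (haarAddCircle : Measure (AddCircle (1 : ℝ))), ‖M‖ ≤ 1 ∧
      ∀ f, M f =ᵐ[(haarAddCircle : Measure (AddCircle (1 : ℝ)))] fun t => φ ((r j : ℂ) * fourier 1 t) (f t) := fun j =>
    exists_mulOp (fun t => φ ((r j : ℂ) * fourier 1 t))
      (hd.continuousOn.comp_continuous (by fun_prop) (hmem j)) (fun t => hb _ (hmem j t))
  choose M hM1 hMae using hM
  obtain ⟨L, hL, hLlim⟩ := exists_weak_limit M hM1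
  have hLlim' : ∀ x y, Tendsto (fun j => inner ℂ y (M j x)) (hyperfilter ℕ : Filter ℕ)
      (𝓝 (inner ℂ y (L x))) := by
    intro x y
    have := (Complex.continuous_conj.tendsto _).comp (hLlim x y)
    rw [inner_conj_symm] at this
    refine this.congr fun j => ?_
    exact inner_conj_symm _ _
  have hMU : ∀ j x, M j (UE x) = UF (M j x) := by
    intro j x
    apply Lp.ext
    filter_upwards [hMae j (UE x), hUE x, hUF (M j x), hMae j x] with t h1 h2 h3 h4
    rw [h1, h2, h3, h4, map_smul]
  have hadjF' : ∀ x y, inner ℂ x (UF y) = inner ℂ (VF x) y := fun x y => by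
    rw [← inner_conj_symm, hadjF, inner_conj_symm]
  have hLU : ∀ x, L (UE x) = UF (L x) := by
    intro x
    refine ext_inner_left ℂ fun y => ?_
    rw [hadjF']
    refine tendsto_nhds_unique (hLlim' (UE x) y) ((hLlim' x (VF y)).congr fun j => ?_)
    rw [hMU, hadjF']
  have hadjFn : ∀ (n : ℕ) x y, inner ℂ x ((UF ^ n) y) = inner ℂ ((VF ^ n) x) y := by
    intro n
    induction n with
    | zero => intro x y; simp
    | succ n ih =>
      intro x y
      rw [pow_succ', mul_apply_eq_comp, hadjF', ih, pow_succ, mul_apply_eq_comp]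
  have hfd : ∀ a b, DifferentiableOn ℂ (fun z => inner ℂ a (φ z b)) (ball (0 : ℂ) 1) := by
    intro a b
    have h1 : DifferentiableOn ℂ (fun z => φ z b) (ball (0 : ℂ) 1) :=
      hd.clm_apply (differentiableOn_const b)
    exact (innerSL ℂ a).differentiable.comp_differentiableOn h1
  have hI : ∀ j (n : ℕ) a b, inner ℂ ((UF ^ n) (cF a)) (M j (cE b)) =
      ∫ t, (fourier 1 t : ℂ) ^ n * (starRingEnd ℂ (fourier 1 t)) ^ 0 *
        inner ℂ a (φ ((r j : ℂ) * fourier 1 t) b) ∂(haarAddCircle : Measure (AddCircle (1 : ℝ))) := by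
    intro j n a b
    rw [L2.inner_def]
    apply integral_congr_ae
    filter_upwards [hUFn n (cF a), hcF a, hMae j (cE b), hcE b] with t h1 h2 h3 h4
    rw [h1, h2, h3, h4, inner_smul_left, map_pow, Complex.conj_conj, pow_zero, mul_one]
  have hJ : ∀ j (n : ℕ) a b, inner ℂ ((VF ^ n) (cF a)) (M j (cE b)) =
      ∫ t, (fourier 1 t : ℂ) ^ 0 * (starRingEnd ℂ (fourier 1 t)) ^ n *
        inner ℂ a (φ ((r j : ℂ) * fourier 1 t) b) ∂(haarAddCircle : Measure (AddCircle (1 : ℝ))) := by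
    intro j n a b
    rw [L2.inner_def]
    apply integral_congr_ae
    filter_upwards [hVFn n (cF a), hcF a, hMae j (cE b), hcE b] with t h1 h2 h3 h4
    rw [h1, h2, h3, h4, inner_smul_left, map_pow, pow_zero, one_mul]
  have hconst : ∀ (n : ℕ) (w : ℂ), ∫ t, (starRingEnd ℂ (fourier 1 t : ℂ)) ^ (n + 1) * w ∂(haarAddCircle : Measure (AddCircle (1 : ℝ))) = 0 := by
    intro n w
    rw [integral_mul_const]
    have := integral_fourier_pow 0 (n + 1)
    simp only [pow_zero, one_mul] at this
    rw [this, if_neg (by omega), zero_mul]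
  refine realization_of_symbol φ UE VE hUVE hVUE hadjE UF VF hUVF hVUF hadjF L hL hLU cF cE
    ?_ ?_ ?_ ?_
  · intro n a b
    rw [L2.inner_def, ← hconst n (inner ℂ a b)]
    apply integral_congr_ae
    filter_upwards [hUFn (n + 1) (cF b), hcF a, hcF b] with t h1 h2 h3
    rw [h1, h2, h3, inner_smul_right]
  · intro n a b
    rw [L2.inner_def, ← hconst n (inner ℂ a b)]
    apply integral_congr_ae
    filter_upwards [hUEn (n + 1) (cE b), hcE a, hcE b] with t h1 h2 h3
    rw [h1, h2, h3, inner_smul_right]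
  · intro n a b
    refine tendsto_nhds_unique (hLlim' (cE b) _) ?_
    refine tendsto_const_nhds.congr fun j => ?_
    rw [hI]
    have h := hasSum_coeff _ (hfd a b) (r j) (hr0 j) (hr1 j) (n + 1) 0
    refine HasSum.unique ?_ h
    refine (hasSum_congr_aux fun m => ?_).mpr hasSum_zero
    rw [if_neg (by omega), mul_zero]
  · intro z hz a b
    have hT := Complex.hasSum_taylorSeries_on_ball (hfd a b) (mem_ball_zero_iff.mpr hz)
    refine (hasSum_congr_aux fun n => ?_).mpr hT
    simp only [sub_zero, smul_eq_mul]
    have hco : inner ℂ (cF a) ((UF ^ n) (L (cE b))) =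
        ((n.factorial : ℂ)⁻¹ * iteratedDeriv n (fun z => (inner ℂ a (φ z b) : ℂ)) 0) := by
      rw [hadjFn]
      refine tendsto_nhds_unique (hLlim' (cE b) _) ?_
      have hlim : Tendsto (fun j => ((r j : ℂ)) ^ n *
          ((n.factorial : ℂ)⁻¹ * iteratedDeriv n (fun z => (inner ℂ a (φ z b) : ℂ)) 0))
          (hyperfilter ℕ : Filter ℕ) (𝓝 (((1 : ℝ) : ℂ) ^ n *
          ((n.factorial : ℂ)⁻¹ * iteratedDeriv n (fun z => (inner ℂ a (φ z b) : ℂ)) 0))) :=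
        (((Complex.continuous_ofReal.tendsto 1).comp hrlim).pow n).mul_const _
      rw [Complex.ofReal_one, one_pow, one_mul] at hlim
      refine hlim.congr fun j => ?_
      rw [hJ]
      have h := hasSum_coeff _ (hfd a b) (r j) (hr0 j) (hr1 j) 0 n
      refine HasSum.unique ?_ h
      have h2 := hasSum_single (f := fun m : ℕ => (r j : ℂ) ^ m * ((m.factorial : ℂ)⁻¹ *
        iteratedDeriv m (fun z => (inner ℂ a (φ z b) : ℂ)) 0) * (if m + 0 = n then 1 else 0)) n
        (fun m hm => by rw [if_neg (by omega), mul_zero])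
      simpa using h2
    rw [hco]
    ring

end circle

/-- a holomorphic `θ : D → [N⁻, N⁺]` is the transfer function of some
one-parametric conservative scattering LSDS if and only if `θ ∈ S⁰(N⁻, N⁺)`, i.e. `θ` is
contractive-valued on the open unit disc and `θ(0) = 0`. -/
theorem transfer_functions_of_conservative_systems_eq_S0.{u}
    {Nm Np : Type u}
    [NormedAddCommGroup Nm] [InnerProductSpace ℂ Nm] [CompleteSpace Nm]
    [TopologicalSpace.SeparableSpace Nm]
    [NormedAddCommGroup Np] [InnerProductSpace ℂ Np] [CompleteSpace Np]
    [TopologicalSpace.SeparableSpace Np]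
    (θ : ℂ → (Nm →L[ℂ] Np))
    (hθ : DifferentiableOn ℂ θ (ball (0 : ℂ) 1)) :
    (∃ (X : Type u) (_ : NormedAddCommGroup X) (_ : InnerProductSpace ℂ X)
      (_ : CompleteSpace X) (_ : TopologicalSpace.SeparableSpace X)
      (A : X →L[ℂ] X) (B : Nm →L[ℂ] X) (C : X →L[ℂ] Np) (D : Nm →L[ℂ] Np),
      IsUnitaryOp (blockOp A B C D) ∧
        ∀ z ∈ ball (0 : ℂ) 1, IsUnit ((1 : X →L[ℂ] X) - z • A) ∧
          θ z = z • D + (z • C) ∘L (Ring.inverse (1 - z • A)) ∘L (z • B)) ↔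
    ((∀ z ∈ ball (0 : ℂ) 1, ‖θ z‖ ≤ 1) ∧ θ 0 = 0) := by
  constructor
  · rintro ⟨X, _, _, _, _, A, B, C, D, hG, h⟩
    refine ⟨fun z hz => ?_, ?_⟩
    · obtain ⟨hu, he⟩ := h z hz
      rw [he]
      exact forward_bound A B C D hG z (mem_ball_zero_iff.mp hz) hu
    · rw [(h 0 (mem_ball_self one_pos)).2]
      simp
  · rintro ⟨hb, h0⟩
    have hd : DifferentiableOn ℂ (dslope θ 0) (ball (0 : ℂ) 1) :=
      (Complex.differentiableOn_dslope (ball_mem_nhds 0 one_pos)).mpr hθ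
    have hn : ∀ z ∈ ball (0 : ℂ) 1, ‖dslope θ 0 z‖ ≤ 1 := by
      intro z hz
      have := Complex.norm_dslope_le_div_of_mapsTo_ball (R₂ := 1) hθ (fun w hw => by
        rw [h0, mem_closedBall_zero_iff]
        exact hb w hw) hz
      simpa using this
    obtain ⟨X, i1, i2, i3, i4, A, B, C, D, hG, h⟩ := realization_of_schur _ hd hn
    refine ⟨X, i1, i2, i3, i4, A, B, C, D, hG, fun z hz => ⟨(h z hz).1, ?_⟩⟩
    rw [← (h z hz).2]
    have := sub_smul_dslope θ 0 z
    rw [sub_zero, h0, sub_zero] at this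
    exact this.symm
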